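/- arXiv:2308.06322 — 5 statements merged into one kernel-verified Lean document; each statement's English description precedes it below -/
import Mathlib

section
/- Let Λ be a countable discrete abelian group and let X be a compact metrizable space with a continuous action of Λ by homeomorphisms. Suppose (X, Λ) is transitive (some point x_0 ∈ X has dense orbit) and topological Abramov of order at most k. Then there exist a polynomial map f : Λ → 𝕋^ℕ of degree at most k (where 𝕋 := ℝ/ℤ and 𝕋^ℕ carries the product topology) and a Λ-equivariant homeomorphism from X onto the orbit closure Y_f, where Y_f is the closure in (𝕋^ℕ)^Λ (product topology, shift action of Λ) of the shift orbit {f(·+z) : z ∈ Λ}. -/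
variable {Λ G Y X : Type*}

/-- Difference operator: `dd h f x = f (x+h) - f x`. -/
def dd [Add Λ] [Sub G] (h : Λ) (f : Λ → G) : Λ → G := fun x => f (x + h) - f x

/-- Iterated difference operator along a list of shifts. -/
def dds [Add Λ] [Sub G] (hs : List Λ) (f : Λ → G) : Λ → G := hs.foldr dd f

/-- `f` is a polynomial map of degree at most `k`. -/
def IsPolyDeg [Add Λ] [AddCommGroup G] (k : ℕ) (f : Λ → G) : Prop :=
  ∀ hs : List Λ, hs.length = k + 1 → ∀ x, dds hs f x = 0

/-- The shift orbit of `f : Λ → G` inside `G^Λ`. -/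
def orbit' [Add Λ] (f : Λ → G) : Set (Λ → G) := {g : Λ → G | ∃ z : Λ, g = fun x => f (x + z)}

/-- Multiplicative derivative `Δ_z φ (y) = φ (z·y) * conj (φ y)` for an action `T`. -/
def pd (T : Λ → Y → Y) (z : Λ) (φ : Y → ℂ) : Y → ℂ :=
  fun y => φ (T z y) * (starRingEnd ℂ) (φ y)

/-- Iterated multiplicative derivative. -/
def pds (T : Λ → Y → Y) (zs : List Λ) (φ : Y → ℂ) : Y → ℂ := zs.foldr (pd T) φ

/-- `φ` is a continuous phase polynomial of degree at most `k` for the action `T` on `Y`. -/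
def IsPhasePoly [TopologicalSpace Y] (T : Λ → Y → Y) (k : ℕ) (φ : Y → ℂ) : Prop :=
  Continuous φ ∧ ∀ zs : List Λ, zs.length = k + 1 → ∀ y, pds T zs φ y = 1

/-- The circle group `𝕋 = ℝ/ℤ`. -/
abbrev UnitTorus : Type := AddCircle (1 : ℝ)

theorem aux_dds_apply [Add Λ] (hs : List Λ) (f : Λ → ℕ → UnitTorus) (x : Λ) (n : ℕ) :
    dds hs f x n = dds hs (fun w => f w n) x := by
  induction hs generalizing x with
  | nil => rfl
  | cons h hs ih =>
    change dds hs f (x + h) n - dds hs f x n = _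
    rw [ih, ih]; rfl

theorem aux_norm (T : Λ → X → X) [AddCommGroup Λ] (hT0 : ∀ x : X, T 0 x = x) (φ : X → ℂ) (m : ℕ)
    (y : X) : ‖pds T (List.replicate m 0) φ y‖ = ‖φ y‖ ^ (2 ^ m) := by
  induction m with
  | zero => simp [pds]
  | succ m ih =>
    rw [List.replicate_succ]
    change ‖pds T (List.replicate m 0) φ (T 0 y) *
      (starRingEnd ℂ) (pds T (List.replicate m 0) φ y)‖ = _
    rw [hT0, norm_mul, RCLike.norm_conj, ih, pow_succ 2 m, pow_mul, sq]

theorem aux_pds [AddCommGroup Λ] (T : Λ → X → X)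
    (hTadd : ∀ (z w : Λ) (x : X), T (z + w) x = T z (T w x))
    (φ : X → ℂ) (θ : X → UnitTorus) (hθ : ∀ x, ((AddCircle.toCircle (θ x) : Circle) : ℂ) = φ x)
    (x : X) (hs : List Λ) (w : Λ) :
    ((AddCircle.toCircle (dds hs (fun w => θ (T w x)) w) : Circle) : ℂ) = pds T hs φ (T w x) := by
  induction hs generalizing w with
  | nil => exact hθ _
  | cons h hs ih =>
    change ((AddCircle.toCircle (dds hs (fun w => θ (T w x)) (w + h)
      - dds hs (fun w => θ (T w x)) w) : Circle) : ℂ) =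
      pds T hs φ (T h (T w x)) * (starRingEnd ℂ) (pds T hs φ (T w x))
    rw [sub_eq_add_neg, AddCircle.toCircle_add, AddCircle.toCircle_neg, Circle.coe_mul,
      Circle.coe_inv_eq_conj, ih, ih, add_comm w h, hTadd]

/-- every transitive topological Abramov system `(X, Λ)` of order at most `k`
(with `X` compact metrizable, `Λ` countable discrete abelian acting by homeomorphisms) is
conjugate to the orbit closure, under the shift action, of a polynomial map
`f : Λ → 𝕋^ℕ` of degree at most `k`, via a `Λ`-equivariant homeomorphism. -/
theorem transitive_topAbramov_conjugate_orbitClosure (k : ℕ)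
    [AddCommGroup Λ] [Countable Λ]
    [TopologicalSpace X] [CompactSpace X] [TopologicalSpace.MetrizableSpace X]
    (T : Λ → X → X)
    (hTcont : ∀ z : Λ, Continuous (T z))
    (hT0 : ∀ x : X, T 0 x = x)
    (hTadd : ∀ (z w : Λ) (x : X), T (z + w) x = T z (T w x))
    (htrans : ∃ x₀ : X, Dense (Set.range fun z : Λ => T z x₀))
    (habramov : ∀ (h : C(X, ℂ)) (ε : ℝ), 0 < ε →
      ∃ g ∈ Submodule.span ℂ {ψ : C(X, ℂ) | IsPhasePoly T k ⇑ψ},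
        ∀ y, ‖h y - g y‖ < ε) :
    ∃ f : Λ → (ℕ → UnitTorus), IsPolyDeg k f ∧
      ∃ e : X ≃ₜ (closure (orbit' f) : Set (Λ → ℕ → UnitTorus)),
        ∀ (z : Λ) (x : X),
          ((e (T z x) : Λ → ℕ → UnitTorus)) = fun w => (e x : Λ → ℕ → UnitTorus) (w + z) := by
  obtain ⟨x₀, hx₀⟩ := htrans
  set P : Set C(X, ℂ) := {ψ : C(X, ℂ) | IsPhasePoly T k ⇑ψ} with hP
  have hone : (1 : C(X, ℂ)) ∈ P := by
    refine ⟨(1 : C(X, ℂ)).continuous, fun zs _ => ?_⟩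
    clear * -
    induction zs with
    | nil => intro y; rfl
    | cons z zs ih =>
      intro y
      change pds T zs _ (T z y) * (starRingEnd ℂ) (pds T zs _ y) = 1
      rw [ih, ih]; simp
  have hnorm : ∀ ψ ∈ P, ∀ x, ‖ψ x‖ = 1 := by
    intro ψ hψ x
    have h1 := aux_norm T hT0 ψ (k + 1) x
    rw [hψ.2 _ (by simp) x, norm_one] at h1
    exact (pow_eq_one_iff_of_nonneg (norm_nonneg _) (by positivity)).1 h1.symm
  let _ : MetricSpace X := TopologicalSpace.metrizableSpaceMetric X
  have : Nonempty P := ⟨⟨1, hone⟩⟩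
  let u : ℕ → P := TopologicalSpace.denseSeq P
  have hu : DenseRange u := TopologicalSpace.denseRange_denseSeq P
  have hsep : ∀ x y : X, (∀ n, (u n : C(X, ℂ)) x = (u n : C(X, ℂ)) y) → x = y := by
    intro x y hxy
    have h1 : ∀ ψ : P, (ψ : C(X, ℂ)) x = (ψ : C(X, ℂ)) y := by
      intro ψ
      have hc : ∀ x : X, Continuous fun ψ : P => (ψ : C(X, ℂ)) x := fun x =>
        (continuous_eval_const x).comp continuous_subtype_val
      exact congrFun (hu.equalizer (hc x) (hc y) (funext hxy)) ψ
    have h2 : ∀ g ∈ Submodule.span ℂ P, g x = g y := by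
      intro g hg
      induction hg using Submodule.span_induction with
      | mem ψ h => exact h1 ⟨ψ, h⟩
      | zero => rfl
      | add a b _ _ ha hb => simp [ha, hb]
      | smul c a _ ha => simp [ha]
    by_contra hne
    have hd : 0 < dist x y := dist_pos.2 hne
    obtain ⟨g, hg, hgh⟩ := habramov ⟨fun z => ((dist z y : ℝ) : ℂ), by fun_prop⟩
      (dist x y / 2) (by positivity)
    have a := hgh x
    have b := hgh y
    simp only [ContinuousMap.coe_mk, dist_self, Complex.ofReal_zero] at a b
    rw [h2 g hg] at a
    have : ‖((dist x y : ℝ) : ℂ)‖ < dist x y := by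
      calc ‖((dist x y : ℝ) : ℂ)‖ = ‖(((dist x y : ℝ) : ℂ) - g y) - (0 - g y)‖ := by
            congr 1; ring
        _ ≤ _ := norm_sub_le _ _
        _ < dist x y := by linarith
    rw [Complex.norm_real, Real.norm_of_nonneg hd.le] at this
    exact lt_irrefl _ this
  let H := AddCircle.homeomorphCircle (T := (1 : ℝ)) one_ne_zero
  let c : ℕ → X → Circle := fun n x => ⟨(u n : C(X, ℂ)) x, by
    exact mem_sphere_zero_iff_norm.2 (hnorm _ (u n).2 x)⟩
  have hc : ∀ n, Continuous (c n) := fun n =>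
    Continuous.subtype_mk (u n : C(X, ℂ)).continuous _
  let θ : ℕ → X → UnitTorus := fun n x => H.symm (c n x)
  have hθc : ∀ n, Continuous (θ n) := fun n => H.symm.continuous.comp (hc n)
  have hθ : ∀ n x, ((AddCircle.toCircle (θ n x) : Circle) : ℂ) = (u n : C(X, ℂ)) x := by
    intro n x
    have : AddCircle.toCircle (θ n x) = c n x := by
      rw [← AddCircle.homeomorphCircle_apply (T := (1 : ℝ)) one_ne_zero]
      exact H.apply_symm_apply _
    rw [this]
  let F : X → Λ → ℕ → UnitTorus := fun x w n => θ n (T w x)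
  have hFc : Continuous F :=
    continuous_pi fun w => continuous_pi fun n => (hθc n).comp (hTcont w)
  have hFi : Function.Injective F := by
    intro x y h
    apply hsep
    intro n
    have h3 : θ n (T 0 x) = θ n (T 0 y) := congrFun (congrFun h 0) n
    rw [hT0, hT0] at h3
    rw [← hθ, ← hθ, h3]
  have hFe : ∀ z x, F (T z x) = fun w => F x (w + z) := by
    intro z x; funext w n
    change θ n (T w (T z x)) = θ n (T (w + z) x)
    rw [hTadd]
  have horb : orbit' (F x₀) = F '' (Set.range fun z : Λ => T z x₀) := by
    ext g
    constructor
    · rintro ⟨z, rfl⟩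
      exact ⟨T z x₀, ⟨z, rfl⟩, hFe z x₀⟩
    · rintro ⟨_, ⟨z, rfl⟩, rfl⟩
      exact ⟨z, hFe z x₀⟩
  have hemb : Topology.IsClosedEmbedding F := hFc.isClosedEmbedding hFi
  have hcl : Set.range F = closure (orbit' (F x₀)) := by
    rw [horb, hemb.closure_image_eq, hx₀.closure_eq, Set.image_univ]
  refine ⟨F x₀, ?_, hemb.isEmbedding.toHomeomorph.trans (Homeomorph.setCongr hcl), ?_⟩
  · intro hs hl x
    funext n
    rw [aux_dds_apply]
    apply AddCircle.injective_toCircle (T := (1 : ℝ)) one_ne_zero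
    apply Circle.ext
    have h4 := aux_pds T hTadd _ (θ n) (hθ n) x₀ hs x
    rw [(u n).2.2 hs hl] at h4
    simpa using h4
  · intro z x
    exact hFe z x
end

section
/- Fix a prime p and an integer k ≥ 1, and let Λ := 𝔽_p^ω = ⊕_{n∈ℕ} ℤ/pℤ. Let X be a compact metrizable space with a continuous action of Λ by homeomorphisms, and suppose (X, Λ) is transitive (some point has dense orbit) and topological Abramov of order at most k. Then there exist a filtered polynomial map f : Λ → H_{p,k} (with respect to the filtration of H_{p,k}) and a Λ-equivariant homeomorphism from X onto the orbit closure of f, i.e. the closure in (H_{p,k})^Λ (product topology, shift action of Λ) of the shift orbit {f(·+z) : z ∈ Λ}. -/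
variable {Λ G Y X : Type*}

/-- `f : Λ → G` is a filtered polynomial with respect to the filtration `Gf`. -/
def IsFilteredPoly [Add Λ] [AddCommGroup G] (Gf : ℕ → AddSubgroup G) (f : Λ → G) : Prop :=
  ∀ hs : List Λ, hs ≠ [] → ∀ x, dds hs f x ∈ Gf hs.length

/-- Discrete topology on `ZMod n` (each factor of `H_{p,k}` is a finite group). -/
instance ZMod.topologicalSpace' (n : ℕ) : TopologicalSpace (ZMod n) := ⊥

/-- The cyclic group `G^{(ℓ)} = ℤ/p^{j_ℓ}ℤ` with `j_ℓ = ⌊(k−ℓ)/(p−1)⌋ + 1`, where the index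
`ℓ : Fin k` represents `ℓ+1 ∈ {1, …, k}`. -/
abbrev Hfactor (p k : ℕ) (ℓ : Fin k) : Type := ZMod (p ^ ((k - (ℓ.1 + 1)) / (p - 1) + 1))

/-- The compact abelian group `H_{p,k} = ∏_{ℓ=1}^{k} (G^{(ℓ)})^ℕ` with the product topology. -/
abbrev Hpk (p k : ℕ) : Type := (ℓ : Fin k) → ℕ → Hfactor p k ℓ

/-- The subgroup `G^{(ℓ)}_{(i)}`: all of `G^{(ℓ)}` for `i ≤ ℓ`, and
`p^{⌊(i−ℓ−1)/(p−1)⌋+1}·G^{(ℓ)}` for `i > ℓ`. -/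
def HfactorFilt (p k : ℕ) (ℓ : Fin k) (i : ℕ) : AddSubgroup (Hfactor p k ℓ) :=
  if i ≤ ℓ.1 + 1 then ⊤
  else AddSubgroup.zmultiples ((p : Hfactor p k ℓ) ^ ((i - (ℓ.1 + 1) - 1) / (p - 1) + 1))

/-- The degree-`k` filtration `(H_{p,k})_{(i)} = ∏_{ℓ=1}^{k} (G^{(ℓ)}_{(i)})^ℕ` on `H_{p,k}`. -/
def HpkFilt (p k : ℕ) (i : ℕ) : AddSubgroup (Hpk p k) :=
  AddSubgroup.pi Set.univ fun ℓ => AddSubgroup.pi Set.univ fun _ : ℕ => HfactorFilt p k ℓ i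

lemma dds_cons' {Λ G : Type*} [Add Λ] [Sub G] (h : Λ) (hs : List Λ) (f : Λ → G) :
    dds (h :: hs) f = dd h (dds hs f) := rfl

lemma dds_replicate_append {Λ G : Type*} [Add Λ] [Sub G] (h : Λ) (m : ℕ) (hs : List Λ)
    (f : Λ → G) : dds (List.replicate m h ++ hs) f = (dd h)^[m] (dds hs f) := by
  induction m with
  | zero => rfl
  | succ m ih =>
    rw [Function.iterate_succ_apply', ← ih, List.replicate_succ, List.cons_append, dds_cons']

lemma dds_hom {Λ G G' : Type*} [Add Λ] [AddCommGroup G] [AddCommGroup G'] (φ : G →+ G')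
    (hs : List Λ) (f : Λ → G) (x : Λ) : dds hs (fun y => φ (f y)) x = φ (dds hs f x) := by
  induction hs generalizing x with
  | nil => rfl
  | cons h t ih => simp only [dds_cons', dd, ih, map_sub]

lemma poly_p_step {Λ G : Type*} [AddCommGroup Λ] [AddCommGroup G] (p : ℕ) (hp : p.Prime)
    (hΛ : ∀ h : Λ, p • h = 0) (F : Λ → G) (d : ℕ)
    (hF : ∀ hs : List Λ, d + 1 ≤ hs.length → ∀ x, dds hs F x = 0) :
    ∀ (n : ℕ) (hs : List Λ), 1 ≤ hs.length → d + 1 ≤ hs.length + n →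
      d + 1 ≤ hs.length + (p - 1) → ∀ x, p • dds hs F x = 0 := by
  intro n
  induction n with
  | zero => intro hs _ h _ x; rw [hF hs (by omega), smul_zero]
  | succ n ih =>
    intro hs h1 h2 h3 x
    obtain _ | ⟨h, t⟩ := hs
    · simp at h1
    simp only [List.length_cons] at h2 h3
    have hp2 := hp.two_le
    have key : dds t F (x + p • h) = ∑ m ∈ Finset.range (p + 1), p.choose m •
        dds (List.replicate m h ++ t) F x := by
      rw [shift_eq_sum_fwdDiff_iter h (dds t F) p x]
      refine Finset.sum_congr rfl fun m _ => ?_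
      rw [dds_replicate_append]; rfl
    rw [hΛ, add_zero] at key
    obtain ⟨q, rfl⟩ : ∃ q, p = q + 1 := ⟨p - 1, by omega⟩
    rw [Finset.sum_range_succ', Finset.sum_range_succ'] at key
    rw [Finset.sum_eq_zero] at key
    · simp only [zero_add, Nat.choose_one_right, Nat.choose_zero_right, one_smul] at key
      simpa [List.replicate] using key
    · intro m hm
      rw [Finset.mem_range] at hm
      rcases Nat.lt_or_ge (m + 1) q with hlt | hge
      · obtain ⟨c, hc⟩ := hp.dvd_choose_self (k := m + 1 + 1) (by omega) (by omega)
        rw [hc, mul_comm, mul_smul, ih, smul_zero]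
        all_goals simp only [List.length_append, List.length_replicate]; omega
      · rw [hF, smul_zero]
        simp only [List.length_append, List.length_replicate]; omega

lemma poly_p_pow {Λ G : Type*} [AddCommGroup Λ] [AddCommGroup G] (p : ℕ) (hp : p.Prime)
    (hΛ : ∀ h : Λ, p • h = 0) (s : ℕ) : ∀ (F : Λ → G) (d : ℕ)
    (_ : ∀ hs : List Λ, d + 1 ≤ hs.length → ∀ x, dds hs F x = 0)
    (hs : List Λ), 1 ≤ hs.length → d + 1 ≤ hs.length + s * (p - 1) →
      ∀ x, p ^ s • dds hs F x = 0 := by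
  induction s with
  | zero => intro F d hF hs _ h x; rw [hF hs (by omega), smul_zero]
  | succ s ih =>
    intro F d hF hs h1 h2 x
    have hom : ∀ (l : List Λ) x, dds l (fun y => p • F y) x = p • dds l F x := fun l x =>
      dds_hom (nsmulAddMonoidHom (α := G) p) l F x
    rw [pow_succ, mul_smul, ← hom]
    refine ih (fun y => p • F y) (d - (p - 1)) ?_ hs h1 ?_ x
    · intro l hl x
      rw [hom]
      exact poly_p_step p hp hΛ F d hF (d + 1) l (by omega) (by omega) (by omega) x
    · rw [add_mul] at h2
      omega

lemma mem_zmult (p j t : ℕ) (hp : p.Prime) (a : ZMod (p ^ j))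
    (h : p ^ (j - t) • a = 0) : a ∈ AddSubgroup.zmultiples ((p : ZMod (p ^ j)) ^ t) := by
  have : NeZero (p ^ j) := ⟨pow_ne_zero _ hp.ne_zero⟩
  rcases Nat.lt_or_ge t j with ht | ht
  · rw [← ZMod.natCast_zmod_val a, nsmul_eq_mul, ← Nat.cast_mul, ZMod.natCast_eq_zero_iff] at h
    have : p ^ t ∣ a.val := by
      have h2 : p ^ (j - t) * p ^ t ∣ p ^ (j - t) * a.val := by
        rw [← pow_add, Nat.sub_add_cancel ht.le]; exact h
      exact Nat.dvd_of_mul_dvd_mul_left (pow_pos hp.pos _) h2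
    obtain ⟨c, hc⟩ := this
    rw [← ZMod.natCast_zmod_val a, hc]
    refine AddSubgroup.mem_zmultiples_iff.2 ⟨c, ?_⟩
    push_cast
    rw [zsmul_eq_mul]; push_cast; ring
  · rw [Nat.sub_eq_zero_of_le ht, pow_zero, one_smul] at h
    rw [h]; exact zero_mem _

lemma norm_pds {Λ Y : Type*} [Zero Λ] (T : Λ → Y → Y) (hT0 : ∀ x, T 0 x = x) (φ : Y → ℂ)
    (m : ℕ) (y : Y) : ‖pds T (List.replicate m 0) φ y‖ = ‖φ y‖ ^ (2 ^ m) := by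
  induction m with
  | zero => simp [pds]
  | succ m ih =>
    have : pds T (List.replicate (m + 1) 0) φ = pd T 0 (pds T (List.replicate m 0) φ) := rfl
    rw [this, pd, hT0, norm_mul, RCLike.norm_conj, ih, pow_succ 2 m, pow_mul, sq]

lemma phase_norm {Λ Y : Type*} [Zero Λ] [TopologicalSpace Y] (T : Λ → Y → Y)
    (hT0 : ∀ x, T 0 x = x) (k : ℕ) (φ : Y → ℂ)
    (h : IsPhasePoly T k φ) (y : Y) : ‖φ y‖ = 1 := by
  have h1 := norm_pds T hT0 φ (k + 1) y
  rw [h.2 _ (by simp), norm_one] at h1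
  exact (pow_eq_one_iff_of_nonneg (norm_nonneg _) (by positivity)).1 h1.symm

/-- additive circle-valued function attached to a unit-modulus function. -/
noncomputable def circ {Y : Type*} (φ : Y → ℂ) (h : ∀ y, ‖φ y‖ = 1) (y : Y) : Additive Circle :=
  Additive.ofMul ⟨φ y, mem_sphere_zero_iff_norm.2 (h y)⟩

lemma dds_circ {Λ Y : Type*} [AddCommGroup Λ] (T : Λ → Y → Y)
    (hTadd : ∀ (z w : Λ) (x : Y), T (z + w) x = T z (T w x))
    (φ : Y → ℂ) (h : ∀ y, ‖φ y‖ = 1) (x : Y) (hs : List Λ) (w : Λ) :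
    ((dds hs (fun z => circ φ h (T z x)) w).toMul : ℂ) = pds T hs φ (T w x) := by
  induction hs generalizing w with
  | nil => rfl
  | cons a t ih =>
    have e : pds T (a :: t) φ = pd T a (pds T t φ) := rfl
    rw [e, dds_cons', dd, pd, toMul_sub, div_eq_mul_inv, Circle.coe_mul, Circle.coe_inv_eq_conj,
      ih, ih, ← hTadd, add_comm]

lemma dds_circ_zero {Λ Y : Type*} [AddCommGroup Λ] [TopologicalSpace Y] (T : Λ → Y → Y)
    (hTadd : ∀ (z w : Λ) (x : Y), T (z + w) x = T z (T w x))
    (k : ℕ) (φ : Y → ℂ) (hφ : IsPhasePoly T k φ) (h : ∀ y, ‖φ y‖ = 1) (x : Y) (hs : List Λ)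
    (hl : k + 1 ≤ hs.length) (w : Λ) : dds hs (fun z => circ φ h (T z x)) w = 0 := by
  induction hs generalizing w with
  | nil => simp at hl
  | cons a t ih =>
    rcases Nat.lt_or_ge t.length (k + 1) with h1 | h1
    · have := dds_circ T hTadd φ h x (a :: t) w
      rw [hφ.2 _ (by simp at hl ⊢; omega)] at this
      apply Additive.toMul.injective
      apply Circle.ext
      rw [this]; rfl
    · rw [dds_cons', dd, ih h1, ih h1, sub_zero]

/-- Each phase polynomial is coded by a continuous `ZMod`-valued function. -/
lemma exists_code {X : Type*} (p k : ℕ) (hp : p.Prime)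
    [TopologicalSpace X] (T : (ℕ →₀ ZMod p) → X → X)
    (hT0 : ∀ x : X, T 0 x = x)
    (hTadd : ∀ (z w : ℕ →₀ ZMod p) (x : X), T (z + w) x = T z (T w x))
    (x₀ : X) (hx₀ : Dense (Set.range fun z : ℕ →₀ ZMod p => T z x₀))
    (ℓ : Fin k) (hℓ : ℓ.1 = (k - 1) % (p - 1)) (φ : X → ℂ) (hφ : IsPhasePoly T k φ) :
    ∃ u : X → Hfactor p k ℓ, Continuous u ∧ (∀ x y, u x = u y → φ x = φ y) ∧
      ∀ hs : List (ℕ →₀ ZMod p), hs ≠ [] → ∀ w,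
        dds hs (fun z => u (T z x₀)) w ∈ HfactorFilt p k ℓ hs.length := by
  have hn := phase_norm T hT0 k φ hφ
  have hk := ℓ.2
  have hp2 := hp.two_le
  obtain ⟨J, hJ⟩ : ∃ J, J = (k - (ℓ.1 + 1)) / (p - 1) := ⟨_, rfl⟩
  have hkJ : k = ℓ.1 + 1 + J * (p - 1) := by
    have h1 := Nat.mod_add_div (k - 1) (p - 1)
    have h2 : k - (ℓ.1 + 1) = (p - 1) * ((k - 1) / (p - 1)) := by omega
    rw [h2, Nat.mul_div_cancel_left _ (by omega)] at hJ
    rw [hJ, mul_comm]; omega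
  have hℓp : ℓ.1 < p - 1 := by rw [hℓ]; exact Nat.mod_lt _ (by omega)
  have hΛ : ∀ h : ℕ →₀ ZMod p, p • h = 0 := fun h => by ext; simp
  have : NeZero (p ^ ((k - (ℓ.1 + 1)) / (p - 1) + 1)) := ⟨pow_ne_zero _ hp.ne_zero⟩
  have hpoly := poly_p_pow (G := Additive Circle) p hp hΛ
  have hz := dds_circ_zero T hTadd k φ hφ hn x₀
  have hroot0 : ∀ z, φ (T z x₀) ^ p ^ (J + 1) = φ x₀ ^ p ^ (J + 1) := by
    intro z
    have := hpoly (J + 1) _ k hz [z] (by simp) (by rw [add_mul]; simp; omega) 0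
    simp only [dds, List.foldr, dd, zero_add, hT0] at this
    rw [smul_sub, sub_eq_zero] at this
    have := congrArg (fun c : Additive Circle => (c.toMul : ℂ)) this
    simp only [toMul_nsmul, Circle.coe_pow] at this
    exact this
  have hroot : ∀ x, φ x ^ p ^ (J + 1) = φ x₀ ^ p ^ (J + 1) := by
    intro x
    have hc : IsClosed {x | φ x ^ p ^ (J + 1) = φ x₀ ^ p ^ (J + 1)} :=
      isClosed_eq (hφ.1.pow _) continuous_const
    have : closure (Set.range fun z => T z x₀) ⊆ _ :=
      closure_minimal (by rintro _ ⟨z, rfl⟩; exact hroot0 z) hc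
    exact this (hx₀ x)
  have hne : ∀ x, φ x ≠ 0 := fun x h => by simpa [h] using hn x
  let χ : Hfactor p k ℓ → Circle := fun a => ZMod.toCircle a
  have hχ : ∀ x, ∃ a : Hfactor p k ℓ, (χ a : ℂ) = φ x / φ x₀ := by
    intro x
    have h1 : (φ x / φ x₀) ^ p ^ ((k - (ℓ.1 + 1)) / (p - 1) + 1) = 1 := by
      rw [← hJ, div_pow, hroot, div_self (pow_ne_zero _ (hne _))]
    obtain ⟨i, hi, h2⟩ := (Complex.isPrimitiveRoot_exp _ (NeZero.ne _)).eq_pow_of_pow_eq_one h1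
    refine ⟨(i : ZMod _), ?_⟩
    rw [← h2]
    have := ZMod.toCircle_natCast (N := p ^ ((k - (ℓ.1 + 1)) / (p - 1) + 1)) i
    simp only [χ]
    rw [this, ← Complex.exp_nat_mul]
    congr 1
    ring
  choose u hu using hχ
  have hχinj : Function.Injective (fun a => (χ a : ℂ)) := fun a b h =>
    ZMod.injective_toCircle (Circle.ext h)
  have : DiscreteTopology (Hfactor p k ℓ) := ⟨rfl⟩
  have : Finite (Hfactor p k ℓ) := inferInstanceAs (Finite (ZMod _))
  refine ⟨u, ?_, ?_, ?_⟩
  · have hemb : Topology.IsClosedEmbedding (fun a => (χ a : ℂ)) :=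
      Topology.IsClosedEmbedding.of_continuous_injective_isClosedMap
        continuous_of_discreteTopology hχinj (fun s _ => (s.toFinite.image _).isClosed)
    rw [hemb.isEmbedding.continuous_iff]
    have : (fun a => (χ a : ℂ)) ∘ u = fun x => φ x / φ x₀ := funext hu
    rw [this]
    exact hφ.1.div_const _
  · intro x y h
    have h1 := hu x
    rw [h, hu y] at h1
    exact ((div_left_inj' (hne _)).1 h1).symm
  · have hχhom : ∃ Χ : Hfactor p k ℓ →+ Additive Circle, ∀ a, Χ a = Additive.ofMul (χ a) :=
      ⟨AddMonoidHom.mk' (fun a => Additive.ofMul (χ a)) (fun a b => by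
        simp only [χ, AddChar.map_add_eq_mul]; rfl), fun a => rfl⟩
    obtain ⟨Χ, hΧ⟩ := hχhom
    have hΧinj : Function.Injective Χ := fun a b h => by
      rw [hΧ, hΧ] at h
      exact ZMod.injective_toCircle (Additive.ofMul.injective h)
    have hFu : ∀ z, Χ (u (T z x₀)) = circ φ hn (T z x₀) - circ φ hn x₀ := by
      intro z
      rw [hΧ]
      apply Additive.toMul.injective
      apply Circle.ext
      rw [toMul_sub, Circle.coe_div, toMul_ofMul, hu]
      rfl
    have hdF : ∀ hs : List (ℕ →₀ ZMod p), hs ≠ [] → ∀ w,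
        Χ (dds hs (fun z => u (T z x₀)) w) = dds hs (fun z => circ φ hn (T z x₀)) w := by
      intro hs
      induction hs with
      | nil => intro h; exact absurd rfl h
      | cons a t ih =>
        intro _ w
        rw [dds_cons', dds_cons', dd, dd, map_sub]
        rcases t with _ | ⟨b, t⟩
        · simp only [dds, List.foldr, hFu]; abel
        · rw [ih (by simp), ih (by simp)]
    intro hs hne' w
    have hlen : 1 ≤ hs.length := List.length_pos_iff.2 hne'
    unfold HfactorFilt
    split_ifs with hi
    · trivial
    · apply mem_zmult _ _ _ hp
      apply hΧinj
      rw [map_nsmul, hdF hs hne', map_zero]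
      refine hpoly _ _ k hz hs hlen ?_ w
      rw [← hJ]
      obtain ⟨t, ht⟩ : ∃ t, t = (hs.length - (ℓ.1 + 1) - 1) / (p - 1) := ⟨_, rfl⟩
      rw [← ht]
      have h3 := Nat.div_mul_le_self (hs.length - (ℓ.1 + 1) - 1) (p - 1)
      rw [← ht] at h3
      have h4 : J ≤ (J + 1 - (t + 1)) + t := by omega
      have h5 := Nat.mul_le_mul_right (p - 1) h4
      rw [add_mul] at h5
      omega

lemma exists_seq {X : Type*} (k : ℕ) {Λ : Type*}
    [TopologicalSpace X] [CompactSpace X] [TopologicalSpace.MetrizableSpace X]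
    (T : Λ → X → X)
    (habramov : ∀ (h : C(X, ℂ)) (ε : ℝ), 0 < ε →
      ∃ g ∈ Submodule.span ℂ {ψ : C(X, ℂ) | IsPhasePoly T k ⇑ψ},
        ∀ y, ‖h y - g y‖ < ε) :
    ∃ φ : ℕ → X → ℂ, (∀ n, IsPhasePoly T k (φ n)) ∧
      ∀ x y, (∀ n, φ n x = φ n y) → x = y := by
  let := TopologicalSpace.metrizableSpaceMetric X
  let P := {ψ : C(X, ℂ) | IsPhasePoly T k ⇑ψ}
  have h1 : (1 : C(X, ℂ)) ∈ P := by
    refine ⟨(1 : C(X, ℂ)).continuous, fun zs _ => ?_⟩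
    clear * -
    intro y
    induction zs generalizing y with
    | nil => rfl
    | cons a t ih =>
      have e : ∀ φ : X → ℂ, pds T (a :: t) φ = pd T a (pds T t φ) := fun _ => rfl
      rw [e, pd, ih, ih]; simp
  have : Nonempty P := ⟨⟨1, h1⟩⟩
  have : TopologicalSpace.SeparableSpace P := inferInstance
  refine ⟨fun n => ⇑(TopologicalSpace.denseSeq P n).1, fun n => (TopologicalSpace.denseSeq P n).2,
    fun x y hxy => ?_⟩
  have hP : ∀ ψ : P, ψ.1 x = ψ.1 y := by
    have hc : IsClosed {ψ : P | ψ.1 x = ψ.1 y} :=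
      isClosed_eq ((continuous_eval_const (F := C(X, ℂ)) x).comp continuous_subtype_val)
        ((continuous_eval_const (F := C(X, ℂ)) y).comp continuous_subtype_val)
    intro ψ
    exact closure_minimal (by rintro _ ⟨n, rfl⟩; exact hxy n) hc
      (TopologicalSpace.denseRange_denseSeq P ψ)
  have hS : ∀ g ∈ Submodule.span ℂ P, g x = g y := by
    intro g hg
    induction hg using Submodule.span_induction with
    | mem g hg => exact hP ⟨g, hg⟩
    | zero => rfl
    | add a b _ _ ha hb => simp [ha, hb]
    | smul c a _ ha => simp [ha]
  by_contra hne
  have hd : 0 < dist y x := dist_pos.2 (Ne.symm hne)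
  obtain ⟨g, hg, hgε⟩ := habramov ⟨fun z => ((dist z x : ℝ) : ℂ), by fun_prop⟩ (dist y x / 2)
    (by linarith)
  have ha := hgε x
  have hb := hgε y
  rw [hS g hg] at ha
  simp only [ContinuousMap.coe_mk, dist_self, Complex.ofReal_zero, zero_sub, norm_neg] at ha hb
  have := norm_le_norm_sub_add ((dist y x : ℝ) : ℂ) (g y)
  rw [Complex.norm_real, Real.norm_of_nonneg hd.le] at this
  linarith

/-- every transitive topological Abramov system `(X, 𝔽_p^ω)` of order at most
`k` (with `X` compact metrizable) is conjugate, via an equivariant homeomorphism, to the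
orbit closure under the shift action of a filtered polynomial map `f : 𝔽_p^ω → H_{p,k}`. -/
theorem transitive_topAbramov_conjugate_orbitClosure_Hpk (p k : ℕ) (hp : p.Prime) (hk : 1 ≤ k)
    [TopologicalSpace X] [CompactSpace X] [TopologicalSpace.MetrizableSpace X]
    (T : (ℕ →₀ ZMod p) → X → X)
    (hTcont : ∀ z, Continuous (T z))
    (hT0 : ∀ x : X, T 0 x = x)
    (hTadd : ∀ (z w : ℕ →₀ ZMod p) (x : X), T (z + w) x = T z (T w x))
    (htrans : ∃ x₀ : X, Dense (Set.range fun z : ℕ →₀ ZMod p => T z x₀))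
    (habramov : ∀ (h : C(X, ℂ)) (ε : ℝ), 0 < ε →
      ∃ g ∈ Submodule.span ℂ {ψ : C(X, ℂ) | IsPhasePoly T k ⇑ψ},
        ∀ y, ‖h y - g y‖ < ε) :
    ∃ f : (ℕ →₀ ZMod p) → Hpk p k, IsFilteredPoly (HpkFilt p k) f ∧
      ∃ e : X ≃ₜ (closure (orbit' f) : Set ((ℕ →₀ ZMod p) → Hpk p k)),
        ∀ (z : ℕ →₀ ZMod p) (x : X),
          ((e (T z x) : (ℕ →₀ ZMod p) → Hpk p k)) =
            fun w => (e x : (ℕ →₀ ZMod p) → Hpk p k) (w + z) := by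
  classical
  obtain ⟨x₀, hx₀⟩ := htrans
  have hp2 := hp.two_le
  obtain ⟨ℓ, hℓ⟩ : ∃ ℓ : Fin k, ℓ.1 = (k - 1) % (p - 1) :=
    ⟨⟨(k - 1) % (p - 1), by have := Nat.mod_le (k - 1) (p - 1); omega⟩, rfl⟩
  obtain ⟨φ, hφ, hsep⟩ := exists_seq k T habramov
  choose u huc huφ hupoly using fun n =>
    exists_code p k hp T hT0 hTadd x₀ hx₀ ℓ hℓ (φ n) (hφ n)
  let S : (ℕ → Hfactor p k ℓ) →+ Hpk p k :=
    AddMonoidHom.single (fun ℓ : Fin k => ℕ → Hfactor p k ℓ) ℓ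
  let E : X → (ℕ →₀ ZMod p) → Hpk p k := fun x w => S (fun n => u n (T w x))
  have hEc : Continuous E := by
    refine continuous_pi fun w => ?_
    have h1 : Continuous (fun x => fun n => u n (T w x)) :=
      continuous_pi fun n => (huc n).comp (hTcont w)
    exact (continuous_single (A := fun ℓ : Fin k => ℕ → Hfactor p k ℓ) ℓ).comp h1
  have hEi : Function.Injective E := by
    intro x y h
    apply hsep
    intro n
    apply huφ n
    have h1 := congrFun (congrFun (congrFun h 0) ℓ) n
    simpa [E, S, hT0] using h1
  have : ∀ n, DiscreteTopology (ZMod n) := fun n => ⟨rfl⟩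
  have hEe : Topology.IsClosedEmbedding E := hEc.isClosedEmbedding hEi
  have hEq : ∀ z x, E (T z x) = fun w => E x (w + z) := by
    intro z x
    funext w
    simp only [E, hTadd]
  refine ⟨E x₀, ?_, ?_⟩
  · intro hs hne w
    have h1 : dds hs (E x₀) w = S (dds hs (fun w n => u n (T w x₀)) w) := dds_hom S hs _ w
    rw [h1]
    intro ℓ' _ n _
    by_cases h : ℓ' = ℓ
    · subst h
      have h2 := dds_hom (Pi.evalAddMonoidHom (fun _ : ℕ => Hfactor p k ℓ') n) hs
        (fun w n => u n (T w x₀)) w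
      have h3 : S (dds hs (fun w n => u n (T w x₀)) w) ℓ' n =
          dds hs (fun w n => u n (T w x₀)) w n := by
        simp [S]
      rw [h3]
      have h4 := hupoly n hs hne w
      simp only [Pi.evalAddMonoidHom_apply] at h2
      rw [h2] at h4
      exact h4
    · have h3 : S (dds hs (fun w n => u n (T w x₀)) w) ℓ' n = 0 := by
        simp [S, Pi.single_eq_of_ne h]
      rw [h3]
      exact (HfactorFilt p k ℓ' hs.length).zero_mem
  · have horb : orbit' (E x₀) = E '' (Set.range fun z => T z x₀) := by
      ext g
      constructor
      · rintro ⟨z, rfl⟩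
        exact ⟨_, ⟨z, rfl⟩, hEq z x₀⟩
      · rintro ⟨_, ⟨z, rfl⟩, rfl⟩
        exact ⟨z, hEq z x₀⟩
    have hcl : Set.range E = closure (orbit' (E x₀)) := by
      rw [horb, hEe.closure_image_eq, hx₀.closure_eq, Set.image_univ]
    exact ⟨hEe.isEmbedding.toHomeomorph.trans (Homeomorph.setCongr hcl), fun z x => hEq z x⟩
end

section
/- Fix a prime p and an integer k ≥ 1, and let Λ := 𝔽_p^ω = ⊕_{n∈ℕ} ℤ/pℤ. For every filtered polynomial map f : Λ → H_{p,k} (with respect to the filtration of H_{p,k}), let Y_f be the closure in (H_{p,k})^Λ (product topology) of the shift orbit {f(·+z) : z ∈ Λ}. Then the system (Y_f, Λ) with the shift action is minimal (for every g ∈ Y_f the orbit {g(·+z) : z ∈ Λ} is dense in Y_f; in particular it is transitive) and is topological Abramov of order at most k. -/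
variable {Λ G Y : Type*}

/-- The orbit closure of a point of `G^Λ` is invariant under the shift action. -/
theorem shift_mem_orbitClosure [AddCommMonoid Λ] [TopologicalSpace G] (f : Λ → G) (z : Λ)
    {g : Λ → G} (hg : g ∈ closure (orbit' f)) :
    (fun x => g (x + z)) ∈ closure (orbit' f) := by
  have hc : Continuous (fun (u : Λ → G) => (fun x => u (x + z))) :=
    continuous_pi fun x => continuous_apply (x + z)
  refine map_mem_closure hc hg ?_
  rintro u ⟨w, rfl⟩
  exact ⟨z + w, by funext x; simp [add_assoc]⟩

theorem dds_shift {Λ G : Type*} [AddCommMonoid Λ] [AddCommGroup G] (hs : List Λ) (z : Λ)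
    (f : Λ → G) (x : Λ) : dds hs (fun y => f (y + z)) x = dds hs f (x + z) := by
  induction hs generalizing x with
  | nil => rfl
  | cons a l ih =>
    change dds l _ (x + a) - dds l _ x = dds l f (x + z + a) - dds l f (x + z)
    rw [ih, ih, add_right_comm]

theorem continuous_dds {Λ G : Type*} [AddCommMonoid Λ] [AddCommGroup G] [TopologicalSpace G]
    [IsTopologicalAddGroup G] (hs : List Λ) (x : Λ) :
    Continuous (fun f : Λ → G => dds hs f x) := by
  induction hs generalizing x with
  | nil => exact continuous_apply x
  | cons a l ih => exact (ih (x + a)).sub (ih x)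

theorem dds_sub {Λ G : Type*} [AddCommMonoid Λ] [AddCommGroup G] (hs : List Λ)
    (f g : Λ → G) (x : Λ) : dds hs (f - g) x = dds hs f x - dds hs g x := by
  induction hs generalizing x with
  | nil => rfl
  | cons a l ih =>
    change dds l _ (x + a) - dds l _ x =
      (dds l f (x + a) - dds l f x) - (dds l g (x + a) - dds l g x)
    rw [ih, ih]; abel

/-- polynomials of degree less than `i` -/
def PolyLt {Λ G : Type*} [AddCommMonoid Λ] [AddCommGroup G] (i : ℕ) (f : Λ → G) : Prop :=
  ∀ hs : List Λ, hs.length = i → ∀ x, dds hs f x = 0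

theorem isClosed_polyLt {Λ G : Type*} [AddCommMonoid Λ] [AddCommGroup G] [TopologicalSpace G]
    [IsTopologicalAddGroup G] [T2Space G] (i : ℕ) : IsClosed {f : Λ → G | PolyLt i f} := by
  simp only [PolyLt, Set.ofPred_forall]
  refine isClosed_iInter fun hs => isClosed_iInter fun _ => isClosed_iInter fun x => ?_
  exact isClosed_eq (continuous_dds hs x) continuous_const

theorem polyLt_shift_sub {Λ G : Type*} [AddCommMonoid Λ] [AddCommGroup G] (i : ℕ)
    (f : Λ → G) (hf : PolyLt (i + 1) f) (z : Λ) : PolyLt i ((fun x => f (x + z)) - f) := by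
  intro hs hl x
  rw [dds_sub, dds_shift]
  exact hf (z :: hs) (by simp [hl]) x

theorem minimal_aux {Λ G : Type*} [AddCommMonoid Λ] [AddCommGroup G] [TopologicalSpace G]
    [IsTopologicalAddGroup G] [T2Space G] [CompactSpace G] (k : ℕ) (f : Λ → G)
    (hf : PolyLt k f) (g : Λ → G) (hg : g ∈ closure (orbit' f)) :
    f ∈ closure (orbit' g) := by
  let X := Λ → G
  let T : Λ → (X → X) := fun z h x => h (x + z)
  have hT : ∀ z, Continuous (T z) := fun z => continuous_pi fun x => continuous_apply (x + z)
  let E : Set (X → X) := closure (Set.range T)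
  have hEc : IsCompact E := isClosed_closure.isCompact
  have orb : ∀ h : X, (fun u : X → X => u h) '' E = closure (orbit' h) := by
    intro h
    have h1 := image_closure_of_isCompact (s := Set.range T) hEc
      (f := fun u : X → X => u h) (continuous_apply h).continuousOn
    rw [h1]
    congr 1
    ext u
    constructor
    · rintro ⟨_, ⟨z, rfl⟩, rfl⟩; exact ⟨z, rfl⟩
    · rintro ⟨z, rfl⟩; exact ⟨_, ⟨z, rfl⟩, rfl⟩
  have hcomp : ∀ u ∈ E, ∀ v ∈ E, u ∘ v ∈ E := by
    intro u hu v hv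
    have h1 : ∀ w, T w ∘ v ∈ E := by
      intro w
      refine map_mem_closure (f := fun v : X → X => T w ∘ v)
        (continuous_pi fun x => (hT w).comp (continuous_apply x)) hv ?_
      rintro _ ⟨z, rfl⟩
      exact ⟨w + z, by funext h x; simp [T, add_assoc]⟩
    have h2 : u ∘ v ∈ closure E := by
      refine map_mem_closure (f := fun u : X → X => u ∘ v)
        (continuous_pi fun x => continuous_apply (v x)) hu ?_
      rintro _ ⟨z, rfl⟩
      exact h1 z
    simpa [E] using h2
  have hadd : ∀ u ∈ E, ∀ a b : X, u (a - b) = u a - u b := by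
    intro u hu a b
    have : IsClosed {u : X → X | u (a - b) = u a - u b} :=
      isClosed_eq (continuous_apply _) ((continuous_apply a).sub (continuous_apply b))
    refine closure_minimal ?_ this hu
    rintro _ ⟨z, rfl⟩
    rfl
  have hlow : ∀ u ∈ E, ∀ i, ∀ a : X, PolyLt (i + 1) a → PolyLt i (u a - a) := by
    intro u hu i a ha
    have hc : Continuous (fun u : X → X => u a - a) := (continuous_apply a).sub continuous_const
    have : IsClosed {u : X → X | PolyLt i (u a - a)} := (isClosed_polyLt i).preimage hc
    refine closure_minimal ?_ this hu
    rintro _ ⟨z, rfl⟩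
    exact polyLt_shift_sub i a ha z
  have hker : ∀ u ∈ E, ∀ i, ∀ a : X, PolyLt i a → u a = 0 → a = 0 := by
    intro u hu i
    induction i with
    | zero => intro a ha _; funext x; exact ha [] rfl x
    | succ i ih =>
      intro a ha h0
      refine ih a ?_ h0
      have := hlow u hu i a ha
      rw [h0] at this
      intro hs hl x
      have h3 := this hs hl x
      rw [dds_sub] at h3
      have h4 : dds hs (0 : X) x = 0 := by
        have := dds_sub hs (0 : X) 0 x
        simpa using this
      rw [h4] at h3
      simpa using h3
  letI : Semigroup (X → X) := { mul := fun u v => u ∘ v, mul_assoc := fun _ _ _ => rfl }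
  have hg' := hg
  rw [← orb f] at hg'
  obtain ⟨u, hu, rfl⟩ := hg'
  have hcl : ∀ r : X → X, Continuous (fun v : X → X => v * r) := fun r =>
    continuous_pi fun x => continuous_apply (r x)
  obtain ⟨e, ⟨v, hv, rfl⟩, he⟩ := exists_idempotent_in_compact_subsemigroup hcl
    ((fun v : X → X => v * u) '' E) ⟨_, u, hu, rfl⟩ (hEc.image (hcl u)) (by
      rintro _ ⟨a, ha, rfl⟩ _ ⟨b, hb, rfl⟩
      exact ⟨a ∘ (u ∘ b), hcomp _ ha _ (hcomp _ hu _ hb), rfl⟩)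
  have heE : v ∘ u ∈ E := hcomp _ hv _ hu
  have hid : (v ∘ u) ((v ∘ u) f) = (v ∘ u) f := congrFun he f
  have h1 : PolyLt k ((v ∘ u) f - f) := by
    intro hs hl x
    have : PolyLt (k + 1) f := by
      intro hs hl x
      cases hs with
      | nil => simp at hl
      | cons a l =>
        have hl' : l.length = k := by simpa using hl
        change dds l f (x + a) - dds l f x = 0
        rw [hf l hl', hf l hl', sub_zero]
    exact hlow _ heE k f this hs hl x
  have h2 := hker _ heE k _ h1 (by rw [hadd _ heE, hid, sub_self])
  rw [← orb]
  exact ⟨v, hv, sub_eq_zero.1 h2⟩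

theorem closure_orbit_subset {Λ G : Type*} [AddCommMonoid Λ] [TopologicalSpace G] (f g : Λ → G)
    (hg : g ∈ closure (orbit' f)) : closure (orbit' g) ⊆ closure (orbit' f) := by
  refine closure_minimal ?_ isClosed_closure
  rintro _ ⟨z, rfl⟩
  exact shift_mem_orbitClosure f z hg

theorem pds_mul {Λ Y : Type*} (T : Λ → Y → Y) (zs : List Λ) (a b : Y → ℂ) (y : Y) :
    pds T zs (a * b) y = pds T zs a y * pds T zs b y := by
  induction zs generalizing y with
  | nil => rfl
  | cons z l ih =>
    change pds T l _ (T z y) * (starRingEnd ℂ) (pds T l _ y) =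
      (pds T l a (T z y) * (starRingEnd ℂ) (pds T l a y)) *
      (pds T l b (T z y) * (starRingEnd ℂ) (pds T l b y))
    rw [ih, ih, map_mul]; ring

theorem pds_star {Λ Y : Type*} (T : Λ → Y → Y) (zs : List Λ) (a : Y → ℂ) (y : Y) :
    pds T zs (star a) y = star (pds T zs a y) := by
  induction zs generalizing y with
  | nil => rfl
  | cons z l ih =>
    change pds T l _ (T z y) * (starRingEnd ℂ) (pds T l _ y) =
      star (pds T l a (T z y) * (starRingEnd ℂ) (pds T l a y))
    rw [ih, ih, star_mul']; rfl

theorem pds_one {Λ Y : Type*} (T : Λ → Y → Y) (zs : List Λ) (y : Y) :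
    pds T zs (1 : Y → ℂ) y = 1 := by
  induction zs generalizing y with
  | nil => rfl
  | cons z l ih =>
    change pds T l _ (T z y) * (starRingEnd ℂ) (pds T l _ y) = 1
    rw [ih, ih]; simp

theorem abramov_aux {Λ Y : Type*} [TopologicalSpace Y] [CompactSpace Y] (T : Λ → Y → Y) (k : ℕ)
    (hsep : ∀ x y : Y, x ≠ y → ∃ φ : C(Y, ℂ), IsPhasePoly T k φ ∧ φ x ≠ φ y)
    (h : C(Y, ℂ)) (ε : ℝ) (hε : 0 < ε) :
    ∃ g ∈ Submodule.span ℂ {ψ : C(Y, ℂ) | IsPhasePoly T k ⇑ψ}, ∀ y, ‖h y - g y‖ < ε := by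
  let M : Submonoid C(Y, ℂ) :=
    { carrier := {ψ : C(Y, ℂ) | IsPhasePoly T k ⇑ψ}
      one_mem' := ⟨map_continuous _, fun zs _ y => pds_one T zs y⟩
      mul_mem' := fun {a b} ha hb => ⟨map_continuous _, fun zs hl y => by
        rw [ContinuousMap.coe_mul, pds_mul, ha.2 zs hl, hb.2 zs hl, one_mul]⟩ }
  have hstar : star (M : Set C(Y, ℂ)) = M := by
    have h1 : ∀ a ∈ M, star a ∈ M := fun a ha => ⟨map_continuous _, fun zs hl y => by
        rw [ContinuousMap.coe_star, pds_star, ha.2 zs hl, star_one]⟩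
    ext a
    constructor
    · intro ha
      have := h1 _ ha
      rwa [star_star] at this
    · intro ha
      exact h1 a ha
  let A : StarSubalgebra ℂ C(Y, ℂ) := StarAlgebra.adjoin ℂ (M : Set C(Y, ℂ))
  have hA : A.toSubalgebra.SeparatesPoints := by
    intro x y hxy
    obtain ⟨φ, hφ, hne⟩ := hsep x y hxy
    exact ⟨φ, ⟨φ, StarAlgebra.subset_adjoin ℂ _ hφ, rfl⟩, hne⟩
  have htop := ContinuousMap.starSubalgebra_topologicalClosure_eq_top_of_separatesPoints A hA
  have hmem : h ∈ closure (A : Set C(Y, ℂ)) := by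
    have : h ∈ A.topologicalClosure := by rw [htop]; trivial
    exact this
  obtain ⟨g, hg, hd⟩ := Metric.mem_closure_iff.1 hmem ε hε
  refine ⟨g, ?_, fun y => ?_⟩
  · have h2 : g ∈ Algebra.adjoin ℂ ((M : Set C(Y, ℂ)) ∪ star (M : Set C(Y, ℂ))) := hg
    rw [hstar, Set.union_self] at h2
    have h3 : g ∈ Subalgebra.toSubmodule (Algebra.adjoin ℂ (M : Set C(Y, ℂ))) := h2
    rw [Algebra.adjoin_eq_span, Submonoid.closure_eq] at h3
    exact h3
  · rw [← dist_eq_norm]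
    exact (ContinuousMap.dist_apply_le_dist y).trans_lt hd

theorem pds_char {Λ G : Type*} [AddCommMonoid Λ] [AddCommGroup G] [TopologicalSpace G]
    (f : Λ → G) (ψ : G → ℂ) (hψ : ∀ a b, ψ (a - b) = ψ a * (starRingEnd ℂ) (ψ b))
    (x : Λ) (zs : List Λ) (F : (closure (orbit' f) : Set (Λ → G))) :
    pds (fun (z : Λ) (F : (closure (orbit' f) : Set (Λ → G))) =>
      (⟨fun x => F.1 (x + z), shift_mem_orbitClosure f z F.2⟩ :
        (closure (orbit' f) : Set (Λ → G)))) zs (fun F => ψ (F.1 x)) F = ψ (dds zs F.1 x) := by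
  induction zs generalizing F with
  | nil => rfl
  | cons z l ih =>
    change pds _ l _ _ * (starRingEnd ℂ) (pds _ l _ F) = ψ (dds l F.1 (x + z) - dds l F.1 x)
    rw [ih, ih, hψ, dds_shift]

instance ZMod.discreteTopology' (n : ℕ) : DiscreteTopology (ZMod n) := ⟨rfl⟩

/-- for every filtered polynomial map `f : 𝔽_p^ω → H_{p,k}`, the orbit
closure `Y_f` of `f` under the shift action is a minimal system (the orbit of every
`g ∈ Y_f` is dense in `Y_f`; in particular `Y_f` is transitive), and `(Y_f, 𝔽_p^ω)` is a
topological Abramov system of order at most `k`. -/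
theorem orbitClosure_Hpk_minimal_topAbramov (p k : ℕ) (hp : p.Prime) (hk : 1 ≤ k)
    (f : (ℕ →₀ ZMod p) → Hpk p k) (hf : IsFilteredPoly (HpkFilt p k) f) :
    (∀ g ∈ closure (orbit' f), closure (orbit' g) = closure (orbit' f)) ∧
    (∀ (h : C((closure (orbit' f) : Set ((ℕ →₀ ZMod p) → Hpk p k)), ℂ)) (ε : ℝ), 0 < ε →
      ∃ g ∈ Submodule.span ℂ
          {ψ : C((closure (orbit' f) : Set ((ℕ →₀ ZMod p) → Hpk p k)), ℂ) |
            IsPhasePoly (fun (z : ℕ →₀ ZMod p)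
                (F : (closure (orbit' f) : Set ((ℕ →₀ ZMod p) → Hpk p k))) =>
              (⟨fun x => F.1 (x + z), shift_mem_orbitClosure f z F.2⟩ :
                (closure (orbit' f) : Set ((ℕ →₀ ZMod p) → Hpk p k)))) k ⇑ψ},
        ∀ y, ‖h y - g y‖ < ε) := by
  
  haveI : Fact p.Prime := ⟨hp⟩
  have hpoly : PolyLt (k + 1) f := by
    intro hs hl x
    have h1 := hf hs (by rintro rfl; simp at hl) x
    funext ℓ n
    have h2 : dds hs f x ℓ n ∈ HfactorFilt p k ℓ hs.length := by
      have := (AddSubgroup.mem_pi _).1 h1 ℓ trivial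
      exact (AddSubgroup.mem_pi _).1 this n trivial
    have hℓ := ℓ.2
    rw [hl, HfactorFilt, if_neg (by omega)] at h2
    have h3 : ((p : Hfactor p k ℓ) ^ ((k + 1 - (ℓ.1 + 1) - 1) / (p - 1) + 1)) = 0 := by
      have : k + 1 - (ℓ.1 + 1) - 1 = k - (ℓ.1 + 1) := by omega
      rw [this, ← Nat.cast_pow]
      exact ZMod.natCast_self _
    rw [h3] at h2
    simpa using h2
  haveI : ∀ ℓ : Fin k, NeZero (p ^ ((k - (ℓ.1 + 1)) / (p - 1) + 1)) :=
    fun ℓ => ⟨pow_ne_zero _ hp.ne_zero⟩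
  refine ⟨fun g hg => Set.Subset.antisymm (closure_orbit_subset f g hg)
    (closure_orbit_subset g f (minimal_aux (k + 1) f hpoly g hg)), ?_⟩
  haveI : CompactSpace (closure (orbit' f) : Set ((ℕ →₀ ZMod p) → Hpk p k)) :=
    isCompact_iff_compactSpace.1 isClosed_closure.isCompact
  apply abramov_aux
  intro F F' hne
  have : ∃ x ℓ n, F.1 x ℓ n ≠ F'.1 x ℓ n := by
    by_contra! hc
    exact hne (Subtype.ext (by funext x ℓ n; exact hc x ℓ n))
  obtain ⟨x, ℓ, n, hx⟩ := this
  let ψ : Hpk p k → ℂ := fun a => (ZMod.toCircle (a ℓ n) : ℂ)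
  have hψc : Continuous ψ :=
    (continuous_of_discreteTopology (f := fun b : Hfactor p k ℓ => (ZMod.toCircle b : ℂ))).comp
      ((continuous_apply n).comp (continuous_apply ℓ))
  have hψ : ∀ a b, ψ (a - b) = ψ a * (starRingEnd ℂ) (ψ b) := by
    intro a b
    change (ZMod.toCircle (a ℓ n - b ℓ n) : ℂ) = _
    rw [AddChar.map_sub_eq_div, div_eq_mul_inv, Circle.coe_mul, Circle.coe_inv_eq_conj]
  have hcont : Continuous (fun F : (closure (orbit' f) : Set ((ℕ →₀ ZMod p) → Hpk p k)) =>
      ψ (F.1 x)) := hψc.comp ((continuous_apply x).comp continuous_subtype_val)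
  refine ⟨⟨_, hcont⟩, ⟨hcont, fun zs hl F => ?_⟩, fun h => ?_⟩
  · refine (pds_char f ψ hψ x zs F).trans ?_
    have h1 : PolyLt (k + 1) F.1 := by
      refine closure_minimal ?_ (isClosed_polyLt (k + 1)) F.2
      rintro _ ⟨z, rfl⟩ hs hl x
      rw [dds_shift]
      exact hpoly hs hl _
    rw [h1 zs hl x]
    simp [ψ]
  · exact hx (ZMod.injective_toCircle (Circle.coe_injective h))
end

section
/- Fix a prime p and an integer k ≥ 1, and let Λ := 𝔽_p^ω = ⊕_{n∈ℕ} ℤ/pℤ. Let φ : Λ → ℝ/ℤ be a polynomial map of degree at most k. Then for every x ∈ Λ, the element φ(x) − φ(0) of ℝ/ℤ is annihilated by p^{⌊(k−1)/(p−1)⌋+1}, i.e. p^{⌊(k−1)/(p−1)⌋+1}·(φ(x) − φ(0)) = 0 in ℝ/ℤ. -/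
variable {Λ G : Type*}

open Polynomial in
theorem aux_comm {R : Type*} [CommRing R] (p k : ℕ) (hp : p.Prime) (a : R)
    (h1 : (1 + a) ^ p = 1) (h2 : a ^ (k + 1) = 0) :
    (p : R) ^ ((k - 1) / (p - 1) + 1) * a = 0 := by
  have hp2 := hp.two_le
  obtain ⟨v, hv⟩ : ∃ v : R, (1 + a) ^ p = 1 + p * (a * (1 + a * v)) + a ^ p := by
    obtain ⟨q, rfl⟩ : ∃ q, p = q + 2 := ⟨p - 2, by omega⟩
    have hdvd : ∀ i ∈ Finset.range q, ∃ c : ℕ, (q + 2).choose (i + 2) = (q + 2) * c := by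
      intro i hi
      rw [Finset.mem_range] at hi
      exact hp.dvd_choose_self (by omega) (by omega)
    choose! c hc using hdvd
    refine ⟨∑ i ∈ Finset.range q, a ^ i * (c i : R), ?_⟩
    rw [add_comm 1 a, add_pow, Finset.sum_range_succ, Finset.sum_range_succ', Finset.sum_range_succ']
    have : ∑ i ∈ Finset.range q, a ^ (i + 1 + 1) * 1 ^ (q + 2 - (i + 1 + 1)) * (((q + 2).choose (i + 1 + 1) : ℕ) : R)
        = ((q + 2 : ℕ) : R) * (a * (a * ∑ i ∈ Finset.range q, a ^ i * (c i : R))) := by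
      simp only [Finset.mul_sum]
      refine Finset.sum_congr rfl fun i hi => ?_
      rw [hc i hi]
      push_cast
      ring
    rw [this]
    simp
    ring
  have hu : IsUnit (1 + a * v) := by
    apply IsNilpotent.isUnit_one_add
    exact ⟨k + 1, by rw [mul_pow, h2, zero_mul]⟩
  obtain ⟨w, hw⟩ := hu.exists_right_inv
  have key : (p : R) * a = a ^ p * (-w) := by
    have : (p : R) * (a * (1 + a * v)) = - a ^ p := by
      linear_combination h1 - hv
    linear_combination w * this - (p : R) * a * hw
  have hj : ∀ j : ℕ, ∃ r : R, (p : R) ^ j * a = a ^ (1 + j * (p - 1)) * r := by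
    intro j
    induction j with
    | zero => exact ⟨1, by simp⟩
    | succ j ih =>
      obtain ⟨r, hr⟩ := ih
      refine ⟨-w * r, ?_⟩
      have e1 : 1 + (j + 1) * (p - 1) = p + j * (p - 1) := by
        rw [add_mul]; omega
      calc (p : R) ^ (j + 1) * a = p * (p ^ j * a) := by ring
        _ = (p * a) * (a ^ (j * (p - 1)) * r) := by rw [hr, pow_add]; ring
        _ = _ := by rw [key, e1, pow_add]; ring
  obtain ⟨r, hr⟩ := hj ((k - 1) / (p - 1) + 1)
  have hle : k + 1 ≤ 1 + ((k - 1) / (p - 1) + 1) * (p - 1) := by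
    have := Nat.lt_div_mul_add (a := k - 1) (b := p - 1) (by omega)
    rw [add_mul]
    omega
  rw [hr, pow_eq_zero_of_le hle h2, zero_mul]

/-- The difference operator as a linear map. -/
def ddL {Λ G : Type*} [Add Λ] [AddCommGroup G] (h : Λ) : Module.End ℤ (Λ → G) where
  toFun := dd h
  map_add' f g := by funext x; simp [dd]; abel
  map_smul' c f := by funext x; simp [dd, smul_sub]

theorem ddL_pow {Λ G : Type*} [Add Λ] [AddCommGroup G] (h : Λ) (n : ℕ) (f : Λ → G) :
    ((ddL h : Module.End ℤ (Λ → G)) ^ n) f = dds (List.replicate n h) f := by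
  induction n with
  | zero => simp [dds]
  | succ n ih =>
    rw [pow_succ', Module.End.mul_apply, ih]
    rfl

theorem one_add_ddL_pow {Λ G : Type*} [AddCommMonoid Λ] [AddCommGroup G] (h : Λ) (n : ℕ)
    (f : Λ → G) (x : Λ) : ((1 + (ddL h : Module.End ℤ (Λ → G))) ^ n) f x = f (x + n • h) := by
  induction n generalizing x with
  | zero => simp
  | succ n ih =>
    rw [pow_succ', Module.End.mul_apply, LinearMap.add_apply, Module.End.one_apply]
    have e (g : Λ → G) : (g + (ddL h : Module.End ℤ (Λ → G)) g) x = g (x + h) := by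
      change g x + (g (x + h) - g x) = _
      abel
    rw [e, ih, add_assoc, succ_nsmul']

/-- Annihilator ideal of a vector. -/
def annI {M : Type*} [AddCommGroup M] (D : Module.End ℤ M) (f : M) :
    Ideal (Polynomial ℤ) where
  carrier := {q | Polynomial.aeval D q f = 0}
  zero_mem' := by simp
  add_mem' {a b} ha hb := by
    simp only [Set.mem_ofPred_eq] at *
    rw [map_add, LinearMap.add_apply, ha, hb, add_zero]
  smul_mem' c a ha := by
    simp only [Set.mem_ofPred_eq] at *
    rw [smul_eq_mul, map_mul, Module.End.mul_apply, ha, map_zero]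

theorem mem_annI {M : Type*} [AddCommGroup M] (D : Module.End ℤ M) (f : M) (q : Polynomial ℤ) :
    q ∈ annI D f ↔ Polynomial.aeval D q f = 0 := Iff.rfl

/-- if `φ : 𝔽_p^ω → ℝ/ℤ` is a polynomial map of degree at most `k`, then for
every `x` the element `φ x − φ 0` is annihilated by `p^{⌊(k−1)/(p−1)⌋+1}`. -/
theorem poly_torus_values_torsion (p k : ℕ) (hp : p.Prime) (hk : 1 ≤ k)
    (φ : (ℕ →₀ ZMod p) → AddCircle (1 : ℝ)) (hφ : IsPolyDeg k φ) :
    ∀ x : ℕ →₀ ZMod p, (p ^ ((k - 1) / (p - 1) + 1) : ℕ) • (φ x - φ 0) = 0 := by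
  intro x
  have hm := aux_comm (R := Polynomial ℤ ⧸ annI (ddL x) φ) p k hp
    (Ideal.Quotient.mk _ Polynomial.X) (by
      rw [← map_one (Ideal.Quotient.mk _), ← map_add, ← map_pow, Ideal.Quotient.eq, mem_annI]
      simp only [map_sub, map_pow, map_add, map_one, Polynomial.aeval_X]
      funext y
      rw [LinearMap.sub_apply, Pi.sub_apply, one_add_ddL_pow]
      have hx : p • x = 0 := by
        ext i
        simp
      simp [hx]) (by
      rw [← map_pow, Ideal.Quotient.eq_zero_iff_mem, mem_annI, map_pow, Polynomial.aeval_X, ddL_pow]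
      funext y
      exact hφ _ (by simp) y)
  rw [← map_natCast (Ideal.Quotient.mk _), ← map_pow, ← map_mul,
    Ideal.Quotient.eq_zero_iff_mem, mem_annI, ← Nat.cast_pow, ← nsmul_eq_mul, map_nsmul,
    Polynomial.aeval_X] at hm
  have h0 := congrFun hm 0
  rw [LinearMap.smul_apply, Pi.smul_apply] at h0
  have e : (ddL x : Module.End ℤ ((ℕ →₀ ZMod p) → AddCircle (1 : ℝ))) φ 0 = φ x - φ 0 := by
    change φ (0 + x) - φ 0 = _
    rw [zero_add]
  rw [e] at h0
  exact h0
end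

section
/- Fix a prime p and an integer k ≥ 1. Let ι : 𝔽_p^ω → ⊕_{n∈ℕ} ℤ be the map sending each element of 𝔽_p^ω = ⊕_{n∈ℕ} ℤ/pℤ to its coordinatewise integer representative in {0,1,…,p−1}. If g̃ : ⊕_{n∈ℕ} ℤ → H_{p,k} is a filtered polynomial map with respect to the filtration of H_{p,k}, then g := g̃ ∘ ι : 𝔽_p^ω → H_{p,k} is a filtered polynomial map with respect to the same filtration, where now the difference operators are taken in the group 𝔽_p^ω. (This expresses the p-homogeneity of H_{p,k}.) -/
variable {Λ G : Type*}

/-- The coordinatewise integer-representative map `ι : 𝔽_p^ω → ⊕_{n∈ℕ} ℤ`, sending each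
coordinate `a ∈ ℤ/pℤ` to its representative `a.val ∈ {0, 1, …, p−1}`. -/
noncomputable def iotaRep (p : ℕ) (hp : p ≠ 0) : (ℕ →₀ ZMod p) → (ℕ →₀ ℤ) :=
  Finsupp.mapRange (fun a => ((ZMod.val a : ℕ) : ℤ))
    (by haveI : NeZero p := ⟨hp⟩; simp)

noncomputable section PolyAux

/-- Group ring. -/
abbrev GR (Λ : Type*) [AddCommGroup Λ] : Type _ := AddMonoidAlgebra ℤ Λ

/-- Basis element. -/
def ge {Λ : Type*} [AddCommGroup Λ] (x : Λ) : GR Λ := AddMonoidAlgebra.single x 1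

theorem ge_add {Λ : Type*} [AddCommGroup Λ] (x y : Λ) : ge (x + y) = ge x * ge y := by
  simp [ge, AddMonoidAlgebra.single_mul_single]

theorem ge_zero {Λ : Type*} [AddCommGroup Λ] : ge (0 : Λ) = 1 := rfl

theorem ge_nsmul {Λ : Type*} [AddCommGroup Λ] (x : Λ) (n : ℕ) : ge (n • x) = ge x ^ n := by
  simp [ge, AddMonoidAlgebra.single_pow]

/-- Linear extension. -/
def lin {Λ G : Type*} [AddCommGroup Λ] [AddCommGroup G] (f : Λ → G) : GR Λ →+ G :=
  (Finsupp.liftAddHom (fun x => (AddMonoidHom.flip (smulAddHom ℤ G)) (f x))).comp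
    (AddMonoidAlgebra.coeffAddEquiv (R := ℤ) (M := Λ)).toAddMonoidHom

theorem lin_ge {Λ G : Type*} [AddCommGroup Λ] [AddCommGroup G] (f : Λ → G) (x : Λ) :
    lin f (ge x) = f x := by
  change (Finsupp.liftAddHom _) (Finsupp.single x (1 : ℤ)) = f x
  rw [Finsupp.liftAddHom_apply_single]
  simp

theorem dds_eq {Λ G : Type*} [AddCommGroup Λ] [AddCommGroup G] (f : Λ → G) (hs : List Λ) :
    ∀ x, dds hs f x = lin f ((hs.map (fun h => ge h - 1)).prod * ge x) := by
  induction hs with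
  | nil => intro x; simp [dds, lin_ge]
  | cons h hs ih =>
    intro x
    change dds hs f (x + h) - dds hs f x = _
    rw [ih, ih, ← map_sub, ge_add, List.map_cons, List.prod_cons]
    congr 1
    ring

/-- The variable `t_i`. -/
def tv (A : Type*) [AddCommGroup A] [One A] (i : ℕ) : GR (ℕ →₀ A) := ge (Finsupp.single i 1) - 1

/-- Spanning subgroup. -/
def Wn (p n : ℕ) : AddSubgroup (GR (ℕ →₀ ZMod p)) :=
  AddSubgroup.closure {w | ∃ (a : ℕ) (s : Multiset ℕ), (∀ i, s.count i < p) ∧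
    n ≤ a * (p - 1) + s.card ∧ w = (p ^ a) • (s.map (tv (ZMod p))).prod}

theorem Wn_anti (p : ℕ) {m n : ℕ} (h : m ≤ n) : Wn p n ≤ Wn p m := by
  apply AddSubgroup.closure_mono
  rintro w ⟨a, s, h1, h2, h3⟩
  exact ⟨a, s, h1, h.trans h2, h3⟩

theorem tv_pow (p : ℕ) (hp : p.Prime) (i : ℕ) :
    tv (ZMod p) i ^ p = - ∑ m ∈ Finset.Ico 1 p, p.choose m • tv (ZMod p) i ^ m := by
  have h1 : (tv (ZMod p) i + 1) ^ p = 1 := by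
    have : (p • Finsupp.single i 1 : ℕ →₀ ZMod p) = 0 := by
      ext j
      simp
    rw [tv, sub_add_cancel, ← ge_nsmul, this, ge_zero]
  rw [add_pow, Finset.sum_range_succ, Finset.range_eq_Ico,
    Finset.sum_eq_sum_Ico_succ_bot hp.pos] at h1
  simp only [one_pow, mul_one, pow_zero, Nat.choose_zero_right, Nat.cast_one, Nat.choose_self,
    zero_add] at h1
  simp only [nsmul_eq_mul, mul_comm]
  linear_combination h1

theorem tv_mul_Wn (p : ℕ) (hp : p.Prime) (i n : ℕ) (w) (hw : w ∈ Wn p n) :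
    tv (ZMod p) i * w ∈ Wn p (n + 1) := by
  induction hw using AddSubgroup.closure_induction with
  | zero => simp
  | add x y _ _ hx hy => rw [mul_add]; exact add_mem hx hy
  | neg x _ hx => rw [mul_neg]; exact neg_mem hx
  | mem x hx =>
    obtain ⟨a, s, h1, h2, rfl⟩ := hx
    by_cases hc : s.count i + 1 < p
    · apply AddSubgroup.subset_closure
      refine ⟨a, i ::ₘ s, ?_, ?_, ?_⟩
      · intro j
        rw [Multiset.count_cons]
        split_ifs with h
        · subst h; exact hc
        · simpa using h1 j
      · simp; omega
      · simp; ring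
    · have hc' : s.count i = p - 1 := by have := h1 i; omega
      obtain ⟨s', rfl⟩ : ∃ s', s = Multiset.replicate (p - 1) i + s' := by
        have : Multiset.replicate (p - 1) i ≤ s := by
          rw [← Multiset.le_count_iff_replicate_le, hc']
        exact Multiset.le_iff_exists_add.1 this
      have hi : s'.count i = 0 := by simpa using hc'
      have hs' : ∀ j, s'.count j < p := by
        intro j
        have := h1 j
        rw [Multiset.count_add] at this
        omega
      have e : tv (ZMod p) i * (p ^ a • (Multiset.map (tv (ZMod p))
          (Multiset.replicate (p - 1) i + s')).prod)
          = - ∑ m ∈ Finset.Ico 1 p, (p.choose m / p) • (p ^ (a + 1) •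
            (Multiset.map (tv (ZMod p)) (Multiset.replicate m i + s')).prod) := by
        have e1 : tv (ZMod p) i * (p ^ a • (Multiset.map (tv (ZMod p))
          (Multiset.replicate (p - 1) i + s')).prod)
           = p ^ a • ((tv (ZMod p) i ^ p) * (Multiset.map (tv (ZMod p)) s').prod) := by
          rw [← mul_pow_sub_one hp.ne_zero]
          simp
          ring
        rw [e1, tv_pow p hp, neg_mul, smul_neg, Finset.sum_mul, Finset.smul_sum]
        congr 1
        apply Finset.sum_congr rfl
        intro m hm
        rw [Finset.mem_Ico] at hm
        obtain ⟨c, hc⟩ := hp.dvd_choose_self (by omega) hm.2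
        rw [hc, Nat.mul_div_cancel_left _ hp.pos]
        simp
        ring
      rw [e]
      refine neg_mem (sum_mem fun m hm => nsmul_mem (AddSubgroup.subset_closure ?_) _)
      rw [Finset.mem_Ico] at hm
      refine ⟨a + 1, _, ?_, ?_, rfl⟩
      · intro j
        rw [Multiset.count_add, Multiset.count_replicate]
        split_ifs with h
        · subst h; omega
        · simpa using hs' j
      · simp only [Multiset.card_add, Multiset.card_replicate] at h2 ⊢
        rw [add_mul]
        omega

theorem ge_sub_mul_Wn (p : ℕ) (hp : p.Prime) (h : ℕ →₀ ZMod p) :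
    ∀ n, ∀ w ∈ Wn p n, (ge h - 1) * w ∈ Wn p (n + 1) := by
  have hadd : ∀ h h' : ℕ →₀ ZMod p, (∀ n, ∀ w ∈ Wn p n, (ge h - 1) * w ∈ Wn p (n + 1)) →
      (∀ n, ∀ w ∈ Wn p n, (ge h' - 1) * w ∈ Wn p (n + 1)) →
      (∀ n, ∀ w ∈ Wn p n, (ge (h + h') - 1) * w ∈ Wn p (n + 1)) := by
    intro h h' H H' n w hw
    have : (ge (h + h') - 1) * w = (ge h' - 1) * ((ge h - 1) * w) + (ge h - 1) * w
        + (ge h' - 1) * w := by rw [ge_add]; ring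
    rw [this]
    exact add_mem (add_mem (Wn_anti p (Nat.le_succ _) (H' _ _ (H _ _ hw))) (H _ _ hw)) (H' _ _ hw)
  have h0 : ∀ n, ∀ w ∈ Wn p n, (ge (0 : ℕ →₀ ZMod p) - 1) * w ∈ Wn p (n + 1) := by
    intro n w _
    simp [ge_zero]
  induction h using Finsupp.induction_linear with
  | zero => exact h0
  | add f g hf hg => exact hadd f g hf hg
  | single i c =>
    haveI : NeZero p := ⟨hp.ne_zero⟩
    have key : ∀ m : ℕ, ∀ n, ∀ w ∈ Wn p n,
        (ge (Finsupp.single i (m : ZMod p)) - 1) * w ∈ Wn p (n + 1) := by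
      intro m
      induction m with
      | zero => simpa using h0
      | succ m ih =>
        rw [Nat.cast_succ, Finsupp.single_add]
        exact hadd _ _ ih (fun n w hw => tv_mul_Wn p hp i n w hw)
    simpa using key c.val

theorem prod_mem_Wn (p : ℕ) (hp : p.Prime) (hs : List (ℕ →₀ ZMod p)) (x : ℕ →₀ ZMod p) :
    (hs.map (fun h => ge h - 1)).prod * ge x ∈ Wn p hs.length := by
  induction hs with
  | nil =>
    have h1 : (1 : GR (ℕ →₀ ZMod p)) ∈ Wn p 0 :=
      AddSubgroup.subset_closure ⟨0, 0, by simp [hp.pos], by simp, by simp⟩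
    have := add_mem (Wn_anti p (Nat.le_succ _) (ge_sub_mul_Wn p hp x 0 1 h1)) h1
    simpa using this
  | cons h hs ih =>
    rw [List.map_cons, List.prod_cons, mul_assoc, List.length_cons]
    exact ge_sub_mul_Wn p hp h _ _ ih

/-- Reduction mod `p`. -/
def redHom (p : ℕ) : (ℕ →₀ ℤ) →+ (ℕ →₀ ZMod p) :=
  Finsupp.mapRange.addMonoidHom (Int.castAddHom (ZMod p))

/-- Reduction on group rings. -/
def redRing (p : ℕ) : GR (ℕ →₀ ℤ) →+* GR (ℕ →₀ ZMod p) :=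
  AddMonoidAlgebra.mapDomainRingHom ℤ (redHom p)

theorem redRing_ge (p : ℕ) (x) : redRing p (ge x) = ge (redHom p x) := by
  simp [redRing, ge]

theorem redRing_tv (p : ℕ) (i) : redRing p (tv ℤ i) = tv (ZMod p) i := by
  rw [tv, map_sub, redRing_ge, map_one, tv]
  simp [redHom]

/-- Box span. -/
def Ds (s : Multiset ℕ) : AddSubgroup (GR (ℕ →₀ ℤ)) :=
  AddSubgroup.closure {w | ∃ v : ℕ →₀ ℤ, (∀ i, 0 ≤ v i ∧ v i ≤ s.count i) ∧ w = ge v}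

theorem prod_mem_Ds (s : Multiset ℕ) : (s.map (tv ℤ)).prod ∈ Ds s := by
  induction s using Multiset.induction_on with
  | empty => exact AddSubgroup.subset_closure ⟨0, by simp, by simp [ge_zero]⟩
  | cons i s ih =>
    rw [Multiset.map_cons, Multiset.prod_cons]
    generalize (s.map (tv ℤ)).prod = w at ih
    induction ih using AddSubgroup.closure_induction with
    | zero => simp
    | add x y _ _ hx hy => rw [mul_add]; exact add_mem hx hy
    | neg x _ hx => rw [mul_neg]; exact neg_mem hx
    | mem x hx =>
      obtain ⟨v, hv, rfl⟩ := hx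
      rw [tv, sub_mul, one_mul, ← ge_add]
      refine sub_mem (AddSubgroup.subset_closure ⟨_, ?_, rfl⟩)
        (AddSubgroup.subset_closure ⟨_, ?_, rfl⟩)
      · intro j
        have := hv j
        rw [Finsupp.add_apply, Finsupp.single_apply, Multiset.count_cons]
        by_cases h : i = j
        · subst h; simp; omega
        · simp [h, Ne.symm h]; omega
      · intro j
        have := hv j
        rw [Multiset.count_cons]
        push_cast
        split_ifs <;> omega

theorem lin_comp {G : Type*} [AddCommGroup G] (p : ℕ) (hp : p ≠ 0) (f : (ℕ →₀ ℤ) → G)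
    (s : Multiset ℕ) (hs : ∀ i, s.count i < p) (w) (hw : w ∈ Ds s) :
    lin (f ∘ iotaRep p hp) (redRing p w) = lin f w := by
  induction hw using AddSubgroup.closure_induction with
  | zero => simp
  | add x y _ _ hx hy => simp only [map_add, hx, hy]
  | neg x _ hx => simp only [map_neg, hx]
  | mem x hx =>
    obtain ⟨v, hv, rfl⟩ := hx
    rw [redRing_ge, lin_ge, lin_ge, Function.comp_apply]
    congr 1
    ext i
    haveI : NeZero p := ⟨hp⟩
    have h1 := hv i
    have h2 := hs i
    simp only [iotaRep, redHom, Finsupp.mapRange_apply, Finsupp.mapRange.addMonoidHom_apply,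
      Int.coe_castAddHom, ZMod.val_intCast]
    exact Int.emod_eq_of_lt h1.1 (by omega)

theorem general {G : Type*} [AddCommGroup G] (Gf : ℕ → AddSubgroup G) (p : ℕ) (hp : p.Prime)
    (h0 : Gf 0 = ⊤) (hanti : Antitone Gf) (hmul : ∀ i, ∀ x ∈ Gf i, p • x ∈ Gf (i + (p - 1)))
    (f : (ℕ →₀ ℤ) → G) (hf : IsFilteredPoly Gf f) :
    IsFilteredPoly Gf (f ∘ iotaRep p hp.ne_zero) := by
  intro hs _ x
  rw [dds_eq]
  have key : ∀ n, ∀ w ∈ Wn p n, lin (f ∘ iotaRep p hp.ne_zero) w ∈ Gf n := by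
    intro n w hw
    induction hw using AddSubgroup.closure_induction with
    | zero => simp
    | add x y _ _ hx hy => rw [map_add]; exact add_mem hx hy
    | neg x _ hx => rw [map_neg]; exact neg_mem hx
    | mem x hx =>
      obtain ⟨a, s, h1, h2, rfl⟩ := hx
      have e : (s.map (tv (ZMod p))).prod = redRing p (s.map (tv ℤ)).prod := by
        rw [map_multiset_prod, Multiset.map_map]
        simp [redRing_tv]
      rw [map_nsmul, e, lin_comp p hp.ne_zero f s h1 _ (prod_mem_Ds s)]
      have h3 : lin f (s.map (tv ℤ)).prod ∈ Gf s.card := by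
        induction s using Quotient.inductionOn with
        | _ l =>
        by_cases hl : l = []
        · subst hl
          simp [h0]
        · have := hf (l.map (fun i => Finsupp.single i 1)) (by simpa using hl) 0
          rw [dds_eq, ge_zero, mul_one, List.map_map, List.length_map] at this
          exact this
      have h4 : ∀ a m, ∀ y ∈ Gf m, p ^ a • y ∈ Gf (a * (p - 1) + m) := by
        intro a
        induction a with
        | zero => intro m y hy; simpa using hy
        | succ a ih =>
          intro m y hy
          have := hmul _ _ (ih m y hy)
          rw [smul_smul, ← pow_succ'] at this
          convert this using 2
          ring
      exact hanti h2 (h4 a _ _ h3)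
  exact key _ _ (prod_mem_Wn p hp hs x)

theorem zmultiples_pow_anti {R : Type*} [CommRing R] (a : ℕ) {m n : ℕ} (h : m ≤ n) :
    AddSubgroup.zmultiples ((a : R) ^ n) ≤ AddSubgroup.zmultiples ((a : R) ^ m) := by
  rw [AddSubgroup.zmultiples_le]
  refine ⟨(a : ℤ) ^ (n - m), ?_⟩
  simp [← pow_add, Nat.sub_add_cancel h]

theorem HfactorFilt_anti (p k : ℕ) (l : Fin k) : Antitone (HfactorFilt p k l) := by
  intro i j hij
  unfold HfactorFilt
  split_ifs with h1 h2 h2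
  · exact le_rfl
  · omega
  · exact le_top
  · apply zmultiples_pow_anti
    gcongr

theorem HfactorFilt_mul (p k : ℕ) (hp : p.Prime) (l : Fin k) (i : ℕ) (x)
    (hx : x ∈ HfactorFilt p k l i) : p • x ∈ HfactorFilt p k l (i + (p - 1)) := by
  have hp2 := hp.two_le
  unfold HfactorFilt at hx ⊢
  split_ifs at hx ⊢ with h1 h2 h2
  · trivial
  · omega
  · have e : (i + (p - 1) - (l.1 + 1) - 1) / (p - 1) = 0 := by
      apply Nat.div_eq_of_lt
      omega
    rw [e]
    haveI : NeZero p := ⟨hp.ne_zero⟩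
    refine ⟨(x.val : ℤ), ?_⟩
    simp [mul_comm]
  · have e : (i + (p - 1) - (l.1 + 1) - 1) / (p - 1) = (i - (l.1 + 1) - 1) / (p - 1) + 1 := by
      rw [← Nat.add_div_right _ (by omega)]
      congr 1
      omega
    rw [e]
    obtain ⟨c, rfl⟩ := hx
    refine ⟨c, ?_⟩
    simp
    ring

end PolyAux

/-- `p`-homogeneity of `H_{p,k}`: if `g̃ : ⊕_{n∈ℕ} ℤ → H_{p,k}` is a filtered
polynomial with respect to the filtration of `H_{p,k}`, then `g̃ ∘ ι : 𝔽_p^ω → H_{p,k}` is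
also a filtered polynomial with respect to the same filtration, where the difference
operators are now taken in the group `𝔽_p^ω`. -/
theorem comp_iotaRep_isFilteredPoly (p k : ℕ) (hp : p.Prime) (hk : 1 ≤ k)
    (gt : (ℕ →₀ ℤ) → Hpk p k) (hgt : IsFilteredPoly (HpkFilt p k) gt) :
    IsFilteredPoly (HpkFilt p k) (gt ∘ iotaRep p hp.ne_zero) := by
  refine general (HpkFilt p k) p hp ?_ ?_ ?_ gt hgt
  · simp [HpkFilt, HfactorFilt, AddSubgroup.pi_top]
  · intro i j hij x hx l hl n hn
    exact HfactorFilt_anti p k l hij (hx l hl n hn)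
  · intro i x hx l hl n hn
    exact HfactorFilt_mul p k hp l i _ (hx l hl n hn)
end
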